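/- Non-asymptotic AEP lower bound for the smoothed max-relative entropy: Let ρ, σ be states on ℂ^d, γ ∈ (0,1] with c_γ(ρ‖σ) < ∞, ε ∈ (0,1) and n ≥ 1. Then (1/n) · D_max^ε(ρ^{⊗n}‖σ^{⊗n}) ≥ D(ρ‖σ) − (4·c_γ(ρ‖σ)/√n) · log(2/(1−ε)). -/

import Mathlib

open scoped Kronecker ComplexOrder

noncomputable section

namespace QCD

attribute [local instance] Classical.propDecidable

variable {n m : Type} [Fintype n] [DecidableEq n] [Fintype m] [DecidableEq m]

/-- The real part of the trace of a complex matrix. -/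
def rtr (A : Matrix n n ℂ) : ℝ := (A.trace).re

/-- A quantum state: positive semidefinite with trace one. -/
def IsState (ρ : Matrix n n ℂ) : Prop := ρ.PosSemidef ∧ ρ.trace = 1

/-- Loewner order: `A ≤ B` iff `B - A` is positive semidefinite. -/
def loewnerLE (A B : Matrix n n ℂ) : Prop := (B - A).PosSemidef

/-- Support containment (for PSD matrices): `ker σ ⊆ ker ρ`. -/
def SuppLE (ρ σ : Matrix n n ℂ) : Prop := ∀ v : n → ℂ, σ.mulVec v = 0 → ρ.mulVec v = 0

/-- Functional calculus for Hermitian matrices (junk value `0` otherwise). -/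
def matFun (f : ℝ → ℝ) (A : Matrix n n ℂ) : Matrix n n ℂ :=
  if hA : A.IsHermitian then
    (hA.eigenvectorUnitary : Matrix n n ℂ) *
      Matrix.diagonal (fun i => (f (hA.eigenvalues i) : ℂ)) *
      (star (hA.eigenvectorUnitary : Matrix n n ℂ))
  else 0

/-- Matrix square root via functional calculus. -/
def msqrt (A : Matrix n n ℂ) : Matrix n n ℂ := matFun Real.sqrt A

/-- Matrix real power taken on the support (`0 ^ t := 0`). -/
def mpow (A : Matrix n n ℂ) (t : ℝ) : Matrix n n ℂ :=
  matFun (fun x => if x = 0 then 0 else x ^ t) A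

/-- Matrix base-2 logarithm on the support. -/
def mlog (A : Matrix n n ℂ) : Matrix n n ℂ := matFun (Real.logb 2) A

/-- Positive part of a Hermitian matrix. -/
def mposPart (A : Matrix n n ℂ) : Matrix n n ℂ := matFun (fun x => max x 0) A

/-- Trace norm. -/
def traceNorm (A : Matrix n m ℂ) : ℝ := rtr (msqrt (A.conjTranspose * A))

/-- Base-2 logarithm as an extended real (`⊥` on nonpositive input). -/
def elog (x : ℝ) : EReal := if x ≤ 0 then ⊥ else ((Real.logb 2 x : ℝ) : EReal)

/-- Base-2 logarithm of an extended real. -/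
def elogE (x : EReal) : EReal := if x = ⊤ then ⊤ else elog x.toReal

/-- `2 ^ x` for an extended real `x`. -/
def epow2 (x : EReal) : EReal :=
  if x = ⊤ then ⊤ else if x = ⊥ then 0 else ((((2:ℝ) ^ x.toReal : ℝ)) : EReal)

/-- Umegaki relative entropy (base 2), `⊤` if the support condition fails. -/
def relEntropy (ρ σ : Matrix n n ℂ) : EReal :=
  if SuppLE ρ σ then ((rtr (ρ * (mlog ρ - mlog σ)) : ℝ) : EReal) else ⊤

/-- Petz–Rényi divergence (base 2). -/
def petzRenyi (α : ℝ) (ρ σ : Matrix n n ℂ) : EReal :=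
  if 1 < α ∧ ¬ SuppLE ρ σ then ⊤
  else (((α - 1)⁻¹ : ℝ) : EReal) * elog (rtr (mpow ρ α * mpow σ (1 - α)))

/-- Geometric (maximal) Rényi divergence (base 2). -/
def geomRenyi (α : ℝ) (ρ σ : Matrix n n ℂ) : EReal :=
  if SuppLE ρ σ then
    (((α - 1)⁻¹ : ℝ) : EReal) *
      elog (rtr (σ * mpow (mpow σ (-(1/2 : ℝ)) * ρ * mpow σ (-(1/2 : ℝ))) α))
  else ⊤

/-- Max-relative entropy (base 2). -/
def dMax (ρ σ : Matrix n n ℂ) : EReal :=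
  sInf {x : EReal | ∃ lam : ℝ, x = (lam : EReal) ∧ loewnerLE ρ ((((2:ℝ) ^ lam : ℝ) : ℂ) • σ)}

/-- Uhlmann fidelity. -/
def fidelity (ρ σ : Matrix n n ℂ) : ℝ := (rtr (msqrt (msqrt σ * ρ * msqrt σ))) ^ 2

/-- Sine (purified) distance. -/
def sineDist (ρ σ : Matrix n n ℂ) : ℝ := Real.sqrt (1 - fidelity ρ σ)

/-- Smoothed max-relative entropy: smoothing over states in the sine-distance ball. -/
def dMaxSmooth (δ : ℝ) (ρ σ : Matrix n n ℂ) : EReal :=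
  ⨅ (ρ' : Matrix n n ℂ) (_ : IsState ρ' ∧ sineDist ρ ρ' ≤ δ), dMax ρ' σ

/-- Hypothesis testing divergence (base 2). -/
def dH (ε : ℝ) (ρ σ : Matrix n n ℂ) : EReal :=
  - elog (sInf {x : ℝ | ∃ T : Matrix n n ℂ,
      T.PosSemidef ∧ ((1 : Matrix n n ℂ) - T).PosSemidef ∧ 1 - ε ≤ rtr (T * ρ) ∧ x = rtr (T * σ)})

/-- The quantity `c_γ(ρ‖σ)`. -/
def cGamma (γ : ℝ) (ρ σ : Matrix n n ℂ) : EReal :=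
  ((γ⁻¹ : ℝ) : EReal) *
    elogE (epow2 ((γ : ℝ) * petzRenyi (1 + γ) ρ σ) +
           epow2 (((-γ : ℝ) : EReal) * petzRenyi (1 - γ) ρ σ) + 1)

/-- Binary entropy (base 2). -/
def binEnt (x : ℝ) : ℝ := -(x * Real.logb 2 x) - (1 - x) * Real.logb 2 (1 - x)

/-- Action of `id_k ⊗ Φ` on block matrices. -/
def blockApply {k : Type} (Φ : Matrix n n ℂ →ₗ[ℂ] Matrix m m ℂ)
    (M : Matrix (k × n) (k × n) ℂ) : Matrix (k × m) (k × m) ℂ :=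
  Matrix.of fun p q => Φ (Matrix.of fun a b => M (p.1, a) (q.1, b)) p.2 q.2

/-- Action of `Φ ⊗ id_k` on block matrices. -/
def blockApplyRight {k : Type} (Φ : Matrix n n ℂ →ₗ[ℂ] Matrix m m ℂ)
    (M : Matrix (n × k) (n × k) ℂ) : Matrix (m × k) (m × k) ℂ :=
  Matrix.of fun p q => Φ (Matrix.of fun a b => M (a, p.2) (b, q.2)) p.1 q.1

/-- Quantum channel: trace preserving and completely positive. -/
def IsQChannel (Φ : Matrix n n ℂ →ₗ[ℂ] Matrix m m ℂ) : Prop :=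
  (∀ M : Matrix n n ℂ, (Φ M).trace = M.trace) ∧
  (∀ k : ℕ, 1 ≤ k → ∀ M : Matrix (Fin k × n) (Fin k × n) ℂ, M.PosSemidef →
    (blockApply Φ M).PosSemidef)

/-- `id_k ⊗ Φ` as a linear map. -/
def blockApplyL (k : Type) (Φ : Matrix n n ℂ →ₗ[ℂ] Matrix m m ℂ) :
    Matrix (k × n) (k × n) ℂ →ₗ[ℂ] Matrix (k × m) (k × m) ℂ where
  toFun := blockApply Φ
  map_add' M N := by
    ext p q
    show Φ (Matrix.of fun a b => (M + N) (p.1, a) (q.1, b)) p.2 q.2 = _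
    have h : (Matrix.of fun a b => (M + N) (p.1, a) (q.1, b)) =
        (Matrix.of fun a b => M (p.1, a) (q.1, b)) +
          (Matrix.of fun a b => N (p.1, a) (q.1, b)) := rfl
    rw [h, map_add]
    rfl
  map_smul' c M := by
    ext p q
    show Φ (Matrix.of fun a b => (c • M) (p.1, a) (q.1, b)) p.2 q.2 = _
    have h : (Matrix.of fun a b => (c • M) (p.1, a) (q.1, b)) =
        c • (Matrix.of fun a b => M (p.1, a) (q.1, b)) := rfl
    rw [h, map_smul]
    rfl

/-- `Φ ⊗ id_k` as a linear map. -/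
def blockApplyRightL (k : Type) (Φ : Matrix n n ℂ →ₗ[ℂ] Matrix m m ℂ) :
    Matrix (n × k) (n × k) ℂ →ₗ[ℂ] Matrix (m × k) (m × k) ℂ where
  toFun := blockApplyRight Φ
  map_add' M N := by
    ext p q
    show Φ (Matrix.of fun a b => (M + N) (a, p.2) (b, q.2)) p.1 q.1 = _
    have h : (Matrix.of fun a b => (M + N) (a, p.2) (b, q.2)) =
        (Matrix.of fun a b => M (a, p.2) (b, q.2)) +
          (Matrix.of fun a b => N (a, p.2) (b, q.2)) := rfl
    rw [h, map_add]
    rfl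
  map_smul' c M := by
    ext p q
    show Φ (Matrix.of fun a b => (c • M) (a, p.2) (b, q.2)) p.1 q.1 = _
    have h : (Matrix.of fun a b => (c • M) (a, p.2) (b, q.2)) =
        c • (Matrix.of fun a b => M (a, p.2) (b, q.2)) := rfl
    rw [h, map_smul]
    rfl

/-- Tensor product of two channels (Kronecker product action). -/
def tensorChannel {n₁ m₁ n₂ m₂ : Type}
    (E₁ : Matrix n₁ n₁ ℂ →ₗ[ℂ] Matrix m₁ m₁ ℂ) (E₂ : Matrix n₂ n₂ ℂ →ₗ[ℂ] Matrix m₂ m₂ ℂ) :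
    Matrix (n₁ × n₂) (n₁ × n₂) ℂ →ₗ[ℂ] Matrix (m₁ × m₂) (m₁ × m₂) ℂ :=
  (blockApplyRightL m₂ E₁).comp (blockApplyL n₁ E₂)

/-- Index type for `k`-fold tensor powers. -/
def tpow (ι : Type) : ℕ → Type
  | 0 => PUnit
  | (k+1) => tpow ι k × ι

def tpowFintype (ι : Type) [Fintype ι] : ∀ k : ℕ, Fintype (tpow ι k)
  | 0 => inferInstanceAs (Fintype PUnit)
  | (k+1) => letI := tpowFintype ι k; inferInstanceAs (Fintype (tpow ι k × ι))

instance (ι : Type) [Fintype ι] (k : ℕ) : Fintype (tpow ι k) := tpowFintype ι k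

def tpowDecEq (ι : Type) [DecidableEq ι] : ∀ k : ℕ, DecidableEq (tpow ι k)
  | 0 => inferInstanceAs (DecidableEq PUnit)
  | (k+1) => letI := tpowDecEq ι k; inferInstanceAs (DecidableEq (tpow ι k × ι))

instance (ι : Type) [DecidableEq ι] (k : ℕ) : DecidableEq (tpow ι k) := tpowDecEq ι k

/-- `k`-fold Kronecker tensor power of a matrix. -/
def tpowMat (ρ : Matrix n n ℂ) : ∀ k : ℕ, Matrix (tpow n k) (tpow n k) ℂ
  | 0 => 1
  | (k+1) => (tpowMat ρ k) ⊗ₖ ρ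

/-- `k`-fold tensor power of a channel. -/
def tpowChannel (Φ : Matrix n n ℂ →ₗ[ℂ] Matrix m m ℂ) :
    ∀ k : ℕ, Matrix (tpow n k) (tpow n k) ℂ →ₗ[ℂ] Matrix (tpow m k) (tpow m k) ℂ
  | 0 => LinearMap.id
  | (k+1) => tensorChannel (tpowChannel Φ k) Φ

/-- Channel divergence induced by a divergence `𝔇` on states:
sup over `k ≥ 1` and input states `ν` on `ℂ^k ⊗ ℂ^d`. -/
def chDiv (𝔇 : ∀ (p : Type) [Fintype p] [DecidableEq p], Matrix p p ℂ → Matrix p p ℂ → EReal)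
    (E F : Matrix n n ℂ →ₗ[ℂ] Matrix m m ℂ) : EReal :=
  ⨆ (k : ℕ) (_ : 1 ≤ k) (ν : Matrix (Fin k × n) (Fin k × n) ℂ) (_ : IsState ν),
    𝔇 (Fin k × m) (blockApply E ν) (blockApply F ν)

/-- The geometric Rényi divergence as a divergence family. -/
def geomD (α : ℝ) : ∀ (p : Type) [Fintype p] [DecidableEq p],
    Matrix p p ℂ → Matrix p p ℂ → EReal :=
  fun _ _ _ => geomRenyi α

/-- The Umegaki relative entropy as a divergence family. -/
def relD : ∀ (p : Type) [Fintype p] [DecidableEq p],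
    Matrix p p ℂ → Matrix p p ℂ → EReal :=
  fun _ _ _ => relEntropy

/-- The hypothesis testing divergence as a divergence family. -/
def dHD (ε : ℝ) : ∀ (p : Type) [Fintype p] [DecidableEq p],
    Matrix p p ℂ → Matrix p p ℂ → EReal :=
  fun _ _ _ => dH ε

/-- Regularized channel relative entropy. -/
def regRelEntropy (E F : Matrix n n ℂ →ₗ[ℂ] Matrix m m ℂ) : EReal :=
  ⨆ (k : ℕ) (_ : 1 ≤ k),
    (((k : ℝ)⁻¹ : ℝ) : EReal) * chDiv relD (tpowChannel E k) (tpowChannel F k)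

end QCD

namespace QCD

/-! ### Scalar estimates -/

lemma sinh_aux (y : ℝ) (hy0 : 0 ≤ y) (hy1 : y ≤ 1) (w : ℝ) (hw : 0 ≤ w) :
    y * Real.cosh (y * w) * Real.sinh w - Real.sinh (y * w) * Real.cosh w ≤ 0 := by
  have hd : ∀ x : ℝ, HasDerivAt
      (fun x => y * Real.cosh (y * x) * Real.sinh x - Real.sinh (y * x) * Real.cosh x)
      ((y ^ 2 - 1) * (Real.sinh (y * x) * Real.sinh x)) x := by
    intro x
    have h1 : HasDerivAt (fun x : ℝ => y * x) y x := by
      simpa using (hasDerivAt_id x).const_mul y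
    have h2 := ((h1.cosh.const_mul y).mul (Real.hasDerivAt_sinh x)).sub
      (h1.sinh.mul (Real.hasDerivAt_cosh x))
    refine h2.congr_deriv ?_
    ring
  have hanti : AntitoneOn
      (fun x => y * Real.cosh (y * x) * Real.sinh x - Real.sinh (y * x) * Real.cosh x)
      (Set.Ici 0) := by
    apply antitoneOn_of_deriv_nonpos (convex_Ici 0)
    · exact fun x _ => (hd x).continuousAt.continuousWithinAt
    · exact fun x _ => (hd x).differentiableAt.differentiableWithinAt
    · intro x hx
      rw [interior_Ici] at hx
      have hx0 : (0 : ℝ) ≤ x := le_of_lt hx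
      rw [(hd x).deriv]
      have h3 : 0 ≤ Real.sinh (y * x) * Real.sinh x :=
        mul_nonneg (Real.sinh_nonneg_iff.2 (mul_nonneg hy0 hx0)) (Real.sinh_nonneg_iff.2 hx0)
      have h4 : y ^ 2 - 1 ≤ 0 := by nlinarith
      exact mul_nonpos_of_nonpos_of_nonneg h4 h3
  have := hanti (Set.mem_Ici.2 le_rfl) (Set.mem_Ici.2 hw) hw
  simpa using this

lemma sinh_ratio (y : ℝ) (hy0 : 0 ≤ y) (hy1 : y ≤ 1) (a b : ℝ) (ha : 0 < a) (hab : a ≤ b) :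
    Real.sinh (y * b) * Real.sinh a ≤ Real.sinh (y * a) * Real.sinh b := by
  have hd : ∀ x : ℝ, 0 < x → HasDerivAt
      (fun x => Real.sinh (y * x) / Real.sinh x)
      ((y * Real.cosh (y * x) * Real.sinh x - Real.sinh (y * x) * Real.cosh x)
        / (Real.sinh x) ^ 2) x := by
    intro x hx
    have h1 : HasDerivAt (fun x : ℝ => y * x) y x := by
      simpa using (hasDerivAt_id x).const_mul y
    have h2 := h1.sinh.div (Real.hasDerivAt_sinh x) (Real.sinh_pos_iff.2 hx).ne'
    refine h2.congr_deriv ?_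
    ring
  have hanti : AntitoneOn (fun x => Real.sinh (y * x) / Real.sinh x) (Set.Ioi 0) := by
    apply antitoneOn_of_deriv_nonpos (convex_Ioi 0)
    · exact fun x hx => (hd x hx).continuousAt.continuousWithinAt
    · intro x hx
      rw [interior_Ioi] at hx
      exact (hd x hx).differentiableAt.differentiableWithinAt
    · intro x hx
      rw [interior_Ioi] at hx
      rw [(hd x hx).deriv]
      exact div_nonpos_of_nonpos_of_nonneg (sinh_aux y hy0 hy1 x (le_of_lt hx)) (sq_nonneg _)
  have hb : 0 < b := lt_of_lt_of_le ha hab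
  have := hanti (Set.mem_Ioi.2 ha) (Set.mem_Ioi.2 hb) hab
  simp only at this
  rwa [div_le_div_iff₀ (Real.sinh_pos_iff.2 hb) (Real.sinh_pos_iff.2 ha)] at this

lemma cosh_tangent_nonneg (y : ℝ) (hy0 : 0 ≤ y) (hy1 : y ≤ 1) (k : ℝ) (hk : 0 < k)
    (w : ℝ) (hw : 0 ≤ w) :
    Real.cosh (y * w) ≤ Real.cosh (y * k) +
      y * Real.sinh (y * k) / Real.sinh k * (Real.cosh w - Real.cosh k) := by
  have hsk := Real.sinh_pos_iff.2 hk
  set f : ℝ → ℝ := fun x => Real.cosh (y * k) +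
      y * Real.sinh (y * k) / Real.sinh k * (Real.cosh x - Real.cosh k) - Real.cosh (y * x) with hf
  have hd : ∀ x : ℝ, HasDerivAt f
      (y / Real.sinh k * (Real.sinh (y * k) * Real.sinh x - Real.sinh (y * x) * Real.sinh k)) x := by
    intro x
    have h1 : HasDerivAt (fun x : ℝ => y * x) y x := by
      simpa using (hasDerivAt_id x).const_mul y
    have h2 := ((((Real.hasDerivAt_cosh x).sub_const (Real.cosh k)).const_mul
      (y * Real.sinh (y * k) / Real.sinh k)).const_add (Real.cosh (y * k))).sub h1.cosh
    refine h2.congr_deriv ?_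
    field_simp
  have hfk : f k = 0 := by simp [hf]
  have hpos : 0 ≤ y / Real.sinh k := div_nonneg hy0 hsk.le
  suffices 0 ≤ f w by
    simp only [hf] at this
    linarith
  rcases le_total w k with hwk | hwk
  · have hanti : AntitoneOn f (Set.Icc 0 k) := by
      apply antitoneOn_of_deriv_nonpos (convex_Icc 0 k)
      · exact fun x _ => (hd x).continuousAt.continuousWithinAt
      · exact fun x _ => (hd x).differentiableAt.differentiableWithinAt
      · intro x hx
        rw [interior_Icc] at hx
        rw [(hd x).deriv]
        have := sinh_ratio y hy0 hy1 x k hx.1 hx.2.le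
        exact mul_nonpos_of_nonneg_of_nonpos hpos (by linarith)
    have := hanti (Set.mem_Icc.2 ⟨hw, hwk⟩) (Set.mem_Icc.2 ⟨hk.le, le_rfl⟩) hwk
    linarith
  · have hmono : MonotoneOn f (Set.Ici k) := by
      apply monotoneOn_of_deriv_nonneg (convex_Ici k)
      · exact fun x _ => (hd x).continuousAt.continuousWithinAt
      · exact fun x _ => (hd x).differentiableAt.differentiableWithinAt
      · intro x hx
        rw [interior_Ici] at hx
        rw [(hd x).deriv]
        have := sinh_ratio y hy0 hy1 k x hk (le_of_lt hx)
        exact mul_nonneg hpos (by linarith)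
    have := hmono (Set.mem_Ici.2 le_rfl) (Set.mem_Ici.2 hwk) hwk
    linarith

lemma cosh_tangent (y : ℝ) (hy0 : 0 ≤ y) (hy1 : y ≤ 1) (k : ℝ) (hk : 0 < k) (w : ℝ) :
    Real.cosh (y * w) ≤ Real.cosh (y * k) +
      y * Real.sinh (y * k) / Real.sinh k * (Real.cosh w - Real.cosh k) := by
  have := cosh_tangent_nonneg y hy0 hy1 k hk |w| (abs_nonneg w)
  rw [Real.cosh_abs] at this
  rwa [← Real.cosh_abs (y * w), abs_mul, abs_of_nonneg hy0]

/-- Second-order bound on a moment generating function. -/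
lemma mgf_bound {ι : Type*} [Fintype ι] (w W : ι → ℝ) (hw : ∀ i, 0 ≤ w i) (hsum : ∑ i, w i = 1)
    (k : ℝ) (hk : 0 < k)
    (hE : ∑ i, w i * Real.exp (W i) + ∑ i, w i * Real.exp (-W i) + 1 = Real.exp k)
    (y : ℝ) (hy0 : 0 ≤ y) (hy1 : y ≤ 1) :
    ∑ i, w i * Real.exp (-(y * W i)) ≤
      Real.exp (-(y * ∑ i, w i * W i) + (2 * Real.cosh (y * k) - 2)) := by
  have hsk := Real.sinh_pos_iff.2 hk
  set B := y * Real.sinh (y * k) / Real.sinh k with hB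
  have hB0 : 0 ≤ B := div_nonneg (mul_nonneg hy0
    (Real.sinh_nonneg_iff.2 (mul_nonneg hy0 hk.le))) hsk.le
  have hcosh : ∑ i, w i * (2 * Real.cosh (W i)) ≤ 2 * Real.cosh k := by
    have h1 : ∑ i, w i * (2 * Real.cosh (W i)) = Real.exp k - 1 := by
      rw [← hE, add_sub_cancel_right, ← Finset.sum_add_distrib]
      refine Finset.sum_congr rfl fun i _ => ?_
      rw [Real.cosh_eq]; ring
    rw [h1, Real.cosh_eq]
    have := Real.exp_pos (-k)
    linarith
  have hpt : ∀ i, w i * Real.exp (-(y * W i)) ≤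
      w i * (2 * Real.cosh (y * k) - 1 - B * (2 * Real.cosh k)) + (-y) * (w i * W i)
        + B * (w i * (2 * Real.cosh (W i))) := by
    intro i
    have h1 := cosh_tangent y hy0 hy1 k hk (W i)
    have h2 := Real.add_one_le_exp (y * W i)
    have h3 : Real.exp (-(y * W i)) ≤ 2 * Real.cosh (y * W i) - 1 - y * W i := by
      rw [Real.cosh_eq]; linarith
    have h4 : Real.exp (-(y * W i)) ≤ 2 * Real.cosh (y * k) - 1 - B * (2 * Real.cosh k) - y * W i
       + B * (2 * Real.cosh (W i)) := by
      rw [← hB] at h1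
      linarith
    calc _ ≤ w i * _ := mul_le_mul_of_nonneg_left h4 (hw i)
      _ = _ := by ring
  have h5 := Finset.sum_le_sum (fun i (_ : i ∈ Finset.univ) => hpt i)
  rw [Finset.sum_add_distrib, Finset.sum_add_distrib, ← Finset.sum_mul, ← Finset.mul_sum,
    ← Finset.mul_sum, hsum] at h5
  have h6 := mul_le_mul_of_nonneg_left hcosh hB0
  have h7 := Real.add_one_le_exp (-(y * ∑ i, w i * W i) + (2 * Real.cosh (y * k) - 2))
  linarith

lemma kappa_ge {ι : Type*} [Fintype ι] (w W : ι → ℝ) (hw : ∀ i, 0 ≤ w i) (hsum : ∑ i, w i = 1) :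
    3 ≤ ∑ i, w i * Real.exp (W i) + ∑ i, w i * Real.exp (-W i) + 1 := by
  have h1 : ∑ i, w i * 2 ≤ ∑ i, (w i * Real.exp (W i) + w i * Real.exp (-W i)) := by
    refine Finset.sum_le_sum fun i _ => ?_
    rw [← mul_add]
    refine mul_le_mul_of_nonneg_left ?_ (hw i)
    have := Real.one_le_cosh (W i)
    rw [Real.cosh_eq] at this
    linarith
  rw [← Finset.sum_mul, hsum, Finset.sum_add_distrib] at h1
  linarith

lemma cosh_small (t : ℝ) (ht0 : 0 ≤ t) (ht1 : t ≤ 1) :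
    2 * Real.cosh (t * Real.log 2) - 2 ≤ t ^ 2 / 2 := by
  have hl : 0 < Real.log 2 := Real.log_pos (by norm_num)
  have hid : ∀ x : ℝ, 2 * Real.cosh x - 2 = 4 * Real.sinh (x / 2) ^ 2 := by
    intro x
    have h := Real.cosh_two_mul (x / 2)
    have h2 := Real.cosh_sq (x / 2)
    rw [mul_div_cancel₀ x (two_ne_zero)] at h
    rw [h, h2]; ring
  have hconv : Real.sinh (t * (Real.log 2 / 2)) ≤ t * Real.sinh (Real.log 2 / 2) := by
    have hd2 : ∀ x : ℝ, HasDerivAt (fun x => t * Real.sinh x - Real.sinh (t * x)) 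
        (t * (Real.cosh x - Real.cosh (t * x))) x := by
      intro x
      have h1 : HasDerivAt (fun x : ℝ => t * x) t x := by
        simpa using (hasDerivAt_id x).const_mul t
      have := ((Real.hasDerivAt_sinh x).const_mul t).sub h1.sinh
      refine this.congr_deriv ?_
      ring
    have hmono : MonotoneOn (fun x => t * Real.sinh x - Real.sinh (t * x)) (Set.Ici 0) := by
      apply monotoneOn_of_deriv_nonneg (convex_Ici 0)
      · exact fun x _ => (hd2 x).continuousAt.continuousWithinAt
      · exact fun x _ => (hd2 x).differentiableAt.differentiableWithinAt
      · intro x hx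
        rw [interior_Ici] at hx
        have hx0 : (0 : ℝ) ≤ x := le_of_lt hx
        rw [(hd2 x).deriv]
        refine mul_nonneg ht0 (sub_nonneg.2 (Real.cosh_le_cosh.2 ?_))
        rw [abs_mul, abs_of_nonneg ht0]
        exact mul_le_of_le_one_left (abs_nonneg x) ht1
    have := hmono (Set.mem_Ici.2 le_rfl) (Set.mem_Ici.2 (by positivity : (0:ℝ) ≤ Real.log 2 / 2))
      (by positivity)
    simp at this
    linarith
  have hc2 : 2 * Real.cosh (Real.log 2) - 2 = 1 / 2 := by
    rw [Real.cosh_eq, Real.exp_neg, Real.exp_log (by norm_num)]; norm_num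
  rw [hid] at hc2 ⊢
  have h0 : 0 ≤ Real.sinh (t * (Real.log 2 / 2)) := Real.sinh_nonneg_iff.2 (by positivity)
  rw [mul_div_assoc]
  calc 4 * Real.sinh (t * (Real.log 2 / 2)) ^ 2 ≤ 4 * (t * Real.sinh (Real.log 2 / 2)) ^ 2 := by
        gcongr
    _ = t ^ 2 * (4 * Real.sinh (Real.log 2 / 2) ^ 2) := by ring
    _ = _ := by rw [hc2]; ring

/-! ### Functional calculus -/

set_option linter.unusedSectionVars false

section Mat

variable {N : Type} [Fintype N] [DecidableEq N]

lemma matFun_eq (f : ℝ → ℝ) {A : Matrix N N ℂ} (hA : A.IsHermitian) :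
    matFun f A = (hA.eigenvectorUnitary : Matrix N N ℂ) *
      Matrix.diagonal (fun i => (f (hA.eigenvalues i) : ℂ)) *
      (star (hA.eigenvectorUnitary : Matrix N N ℂ)) := by
  rw [matFun, dif_pos hA]

lemma matFun_mul (f g : ℝ → ℝ) {A : Matrix N N ℂ} (hA : A.IsHermitian) :
    matFun f A * matFun g A = matFun (fun x => f x * g x) A := by
  rw [matFun_eq f hA, matFun_eq g hA, matFun_eq _ hA]
  have h : star (hA.eigenvectorUnitary : Matrix N N ℂ) *
      (hA.eigenvectorUnitary : Matrix N N ℂ) = 1 := Unitary.coe_star_mul_self _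
  calc _ = (hA.eigenvectorUnitary : Matrix N N ℂ) *
      Matrix.diagonal (fun i => (f (hA.eigenvalues i) : ℂ)) *
      (star (hA.eigenvectorUnitary : Matrix N N ℂ) * (hA.eigenvectorUnitary : Matrix N N ℂ)) *
      Matrix.diagonal (fun i => (g (hA.eigenvalues i) : ℂ)) *
      (star (hA.eigenvectorUnitary : Matrix N N ℂ)) := by simp only [mul_assoc]
    _ = _ := by
      rw [h, mul_one, mul_assoc _ (Matrix.diagonal _) (Matrix.diagonal _),
        Matrix.diagonal_mul_diagonal]
      push_cast
      rfl

lemma matFun_id {A : Matrix N N ℂ} (hA : A.IsHermitian) : matFun (fun x => x) A = A := by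
  rw [matFun_eq _ hA]
  conv_rhs => rw [hA.spectral_theorem]
  rfl

lemma matFun_one {A : Matrix N N ℂ} (hA : A.IsHermitian) : matFun (fun _ => 1) A = 1 := by
  rw [matFun_eq _ hA]
  have h : (hA.eigenvectorUnitary : Matrix N N ℂ) *
      star (hA.eigenvectorUnitary : Matrix N N ℂ) = 1 := Unitary.coe_mul_star_self _
  simp [h]

lemma matFun_herm (f : ℝ → ℝ) (A : Matrix N N ℂ) : (matFun f A).IsHermitian := by
  by_cases hA : A.IsHermitian
  · rw [matFun_eq _ hA, Matrix.star_eq_conjTranspose]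
    apply Matrix.isHermitian_mul_mul_conjTranspose
    rw [Matrix.isHermitian_diagonal_iff]
    intro i
    simp [isSelfAdjoint_iff]
  · rw [matFun, dif_neg hA]
    exact Matrix.isHermitian_zero

lemma matFun_congr {f g : ℝ → ℝ} {A : Matrix N N ℂ} (hA : A.PosSemidef)
    (h : ∀ x, 0 ≤ x → f x = g x) : matFun f A = matFun g A := by
  rw [matFun_eq _ hA.1, matFun_eq _ hA.1]
  have : ∀ i, f (hA.1.eigenvalues i) = g (hA.1.eigenvalues i) :=
    fun i => h _ (hA.eigenvalues_nonneg i)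
  simp only [this]

lemma trace_nonneg_re (A : Matrix N N ℂ) : 0 ≤ rtr (A * A.conjTranspose) := by
  have := (Matrix.posSemidef_self_mul_conjTranspose A).trace_nonneg
  exact (Complex.le_def.1 this).1

lemma rtr_add (A B : Matrix N N ℂ) : rtr (A + B) = rtr A + rtr B := by
  simp [rtr, Matrix.trace_add]

lemma rtr_sub (A B : Matrix N N ℂ) : rtr (A - B) = rtr A - rtr B := by
  simp [rtr, Matrix.trace_sub]

lemma rtr_comm (A B : Matrix N N ℂ) : rtr (A * B) = rtr (B * A) := by
  rw [rtr, Matrix.trace_mul_comm, rtr]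

lemma rtr_real_smul (c : ℝ) (A : Matrix N N ℂ) : rtr ((c : ℂ) • A) = c * rtr A := by
  simp [rtr, Matrix.trace_smul]

lemma rtr_self_conj (A : Matrix N N ℂ) :
    rtr (A * A.conjTranspose) = ∑ i, ∑ j, ‖A i j‖ ^ 2 := by
  simp only [rtr, Matrix.trace, Matrix.diag, Matrix.mul_apply, Matrix.conjTranspose_apply,
    Complex.re_sum]
  refine Finset.sum_congr rfl fun i _ => Finset.sum_congr rfl fun j _ => ?_
  rw [← Complex.normSq_eq_norm_sq]
  simp [Complex.normSq_apply]

lemma rtr_cauchy (A B : Matrix N N ℂ) :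
    rtr (A * B) ≤ Real.sqrt (rtr (A * A.conjTranspose)) *
      Real.sqrt (rtr (B.conjTranspose * B)) := by
  have h1 : rtr (A * B) ≤ ∑ x : N × N, ‖A x.1 x.2‖ * ‖B x.2 x.1‖ := by
    rw [Fintype.sum_prod_type]
    simp only [rtr, Matrix.trace, Matrix.diag, Matrix.mul_apply, Complex.re_sum]
    refine Finset.sum_le_sum fun i _ => Finset.sum_le_sum fun j _ => ?_
    rw [← norm_mul]
    exact Complex.re_le_norm _
  refine h1.trans ((Real.sum_mul_le_sqrt_mul_sqrt _ _ _).trans (le_of_eq ?_))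
  congr 2
  · rw [rtr_self_conj, Fintype.sum_prod_type]
  · have : B.conjTranspose * B = B.conjTranspose * (B.conjTranspose).conjTranspose := by simp
    rw [this, rtr_self_conj, Fintype.sum_prod_type]
    simp

lemma rtr_proj_le (A E : Matrix N N ℂ) (hE : E.IsHermitian) (hE2 : E * E = E) :
    rtr (A * E * A.conjTranspose) ≤ rtr (A * A.conjTranspose) := by
  have h := trace_nonneg_re (A * (1 - E))
  have h2 : A * (1 - E) * (A * (1 - E)).conjTranspose
      = A * A.conjTranspose - A * E * A.conjTranspose := by
    have h3 : (1 - E) * (1 - E) = 1 - E := by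
      simp [mul_sub, sub_mul, hE2]
    rw [Matrix.conjTranspose_mul, Matrix.conjTranspose_sub, Matrix.conjTranspose_one, hE.eq]
    calc _ = A * ((1 - E) * (1 - E)) * A.conjTranspose := by simp only [mul_assoc]
      _ = _ := by rw [h3, mul_sub, sub_mul, mul_one]
  rw [h2, rtr_sub] at h
  linarith

lemma rtr_conj_mono (T A B : Matrix N N ℂ) (h : (B - A).PosSemidef) :
    rtr (T * A * T.conjTranspose) ≤ rtr (T * B * T.conjTranspose) := by
  have h1 := (h.mul_mul_conjTranspose_same T).trace_nonneg
  have h2 := (Complex.le_def.1 h1).1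
  change 0 ≤ rtr _ at h2
  rw [mul_sub, sub_mul, rtr_sub] at h2
  linarith

lemma msqrt_mul_self {A : Matrix N N ℂ} (hA : A.PosSemidef) : msqrt A * msqrt A = A := by
  rw [msqrt, matFun_mul _ _ hA.1]
  conv_rhs => rw [← matFun_id hA.1]
  exact matFun_congr hA fun x hx => Real.mul_self_sqrt hx

lemma rtr_msqrt_nonneg (A : Matrix N N ℂ) (hA : A.PosSemidef) : 0 ≤ rtr (msqrt A) := by
  have h : msqrt A = matFun (fun x => Real.sqrt (Real.sqrt x)) A *
      (matFun (fun x => Real.sqrt (Real.sqrt x)) A).conjTranspose := by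
    rw [(matFun_herm _ A).eq, matFun_mul _ _ hA.1]
    exact matFun_congr hA fun x _ => (Real.mul_self_sqrt (Real.sqrt_nonneg x)).symm
  rw [h]
  exact trace_nonneg_re _

/-- Upper bound on the root fidelity by a (not necessarily Hermitian) test. -/
lemma fid_bound (G ω T S : Matrix N N ℂ) (hω : IsState ω) (hG : rtr (G.conjTranspose * G) = 1)
    (c : ℝ) (h : ((c : ℂ) • S - ω).PosSemidef) :
    rtr (msqrt (msqrt ω * (G.conjTranspose * G) * msqrt ω)) ≤
      Real.sqrt (rtr ((G * (1 - T)).conjTranspose * (G * (1 - T)))) +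
      Real.sqrt (c * rtr (T * S * T.conjTranspose)) := by
  set R := msqrt ω with hR
  have hRh : R.conjTranspose = R := (matFun_herm _ _).eq
  have hRR : R * R = ω := msqrt_mul_self hω.1
  set Y := G * R with hY
  have hN : R * (G.conjTranspose * G) * R = Y.conjTranspose * Y := by
    rw [hY, Matrix.conjTranspose_mul, hRh]; simp only [mul_assoc]
  rw [hN]
  set M := Y.conjTranspose * Y with hM
  have hMp : M.PosSemidef := Matrix.posSemidef_conjTranspose_mul_self Y
  set Q := matFun (fun x => (Real.sqrt x)⁻¹) M with hQ
  have hQh : Q.conjTranspose = Q := (matFun_herm _ _).eq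
  set K := Q * Y.conjTranspose with hK
  have hMid : matFun (fun x => x) M = M := matFun_id hMp.1
  have hKY : K * Y = msqrt M := by
    rw [hK, mul_assoc, ← hM, hQ]
    calc matFun (fun x => (Real.sqrt x)⁻¹) M * M
        = matFun (fun x => (Real.sqrt x)⁻¹) M * matFun (fun x => x) M := by rw [hMid]
      _ = _ := by
        rw [matFun_mul _ _ hMp.1]
        refine matFun_congr hMp fun x hx => ?_
        rcases hx.eq_or_lt with rfl | hx
        · simp
        · have := Real.sqrt_pos.2 hx
          field_simp
          rw [Real.sq_sqrt hx.le]
  have hKh : K.conjTranspose = Y * Q := by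
    rw [hK, Matrix.conjTranspose_mul, hQh, Matrix.conjTranspose_conjTranspose]
  have hKKK : K * K.conjTranspose * K = K := by
    have h1 : Q * M * Q * Q = Q := by
      calc Q * M * Q * Q = Q * matFun (fun x => x) M * Q * Q := by rw [hMid]
        _ = Q := by
          rw [hQ, matFun_mul _ _ hMp.1, matFun_mul _ _ hMp.1, matFun_mul _ _ hMp.1]
          refine matFun_congr hMp fun x hx => ?_
          rcases hx.eq_or_lt with rfl | hx
          · simp
          · have := Real.sqrt_pos.2 hx
            field_simp
            rw [Real.sq_sqrt hx.le]
    calc K * K.conjTranspose * K = Q * M * Q * Q * Y.conjTranspose := by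
          rw [hKh, hK, hM]; simp only [mul_assoc]
      _ = K := by rw [h1]
  have hE1 : K * K.conjTranspose * (K * K.conjTranspose) = K * K.conjTranspose := by
    rw [← mul_assoc, hKKK]
  have hE2 : K.conjTranspose * K * (K.conjTranspose * K) = K.conjTranspose * K := by
    calc _ = K.conjTranspose * (K * K.conjTranspose * K) := by simp only [mul_assoc]
      _ = _ := by rw [hKKK]
  have hsplit : msqrt M = K * G * (1 - T) * R + K * G * (T * R) := by
    rw [← hKY, hY, mul_sub, sub_mul, mul_one]
    simp only [mul_assoc]
    abel
  rw [hsplit, rtr_add]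
  have hωtr : rtr ω = 1 := by rw [rtr, hω.2]; simp
  have hA : rtr (K * G * (1 - T) * R) ≤
      Real.sqrt (rtr ((G * (1 - T)).conjTranspose * (G * (1 - T)))) := by
    have e1 : rtr (K * G * (1 - T) * R) = rtr ((R * K) * (G * (1 - T))) := by
      rw [rtr_comm]; simp only [mul_assoc]
    rw [e1]
    refine (rtr_cauchy _ _).trans ?_
    have e2 : rtr (R * K * (R * K).conjTranspose) ≤ 1 := by
      have e3 := rtr_proj_le R (K * K.conjTranspose)
        (Matrix.isHermitian_mul_conjTranspose_self K) hE1
      rw [hRh, hRR, hωtr] at e3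
      rw [Matrix.conjTranspose_mul, hRh]
      simpa only [mul_assoc] using e3
    calc _ ≤ 1 * Real.sqrt (rtr ((G * (1 - T)).conjTranspose * (G * (1 - T)))) := by
          gcongr
          exact Real.sqrt_le_one.2 e2
      _ = _ := one_mul _
  have hB : rtr (K * G * (T * R)) ≤ Real.sqrt (c * rtr (T * S * T.conjTranspose)) := by
    refine (rtr_cauchy _ _).trans ?_
    have e2 : rtr (K * G * (K * G).conjTranspose) ≤ 1 := by
      have e3 := rtr_proj_le G.conjTranspose (K.conjTranspose * K)
        (Matrix.isHermitian_conjTranspose_mul_self K) hE2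
      rw [Matrix.conjTranspose_conjTranspose, hG] at e3
      rw [rtr_comm, Matrix.conjTranspose_mul]
      simpa only [mul_assoc] using e3
    have e4 : rtr ((T * R).conjTranspose * (T * R)) ≤ c * rtr (T * S * T.conjTranspose) := by
      have e5 := rtr_conj_mono T _ _ h
      rw [Matrix.mul_smul, Matrix.smul_mul, rtr_real_smul] at e5
      refine le_trans (le_of_eq ?_) e5
      rw [rtr_comm, Matrix.conjTranspose_mul, hRh, ← hRR]
      simp only [mul_assoc]
    calc _ ≤ 1 * Real.sqrt (c * rtr (T * S * T.conjTranspose)) := by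
          gcongr
          exact Real.sqrt_le_one.2 e2
      _ = _ := one_mul _
  exact add_le_add hA hB

/-- Trace of a product of functions of two matrices. -/
lemma rtr_two (U V : Matrix N N ℂ) (f g : N → ℝ) :
    rtr ((U * Matrix.diagonal (fun i => (f i : ℂ)) * U.conjTranspose) *
      (V * Matrix.diagonal (fun i => (g i : ℂ)) * V.conjTranspose)) =
      ∑ i, ∑ j, f i * g j * ‖(U.conjTranspose * V) i j‖ ^ 2 := by
  set Z := U.conjTranspose * V with hZ
  have hZh : Z.conjTranspose = V.conjTranspose * U := by
    rw [hZ, Matrix.conjTranspose_mul, Matrix.conjTranspose_conjTranspose]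
  have e1 : rtr ((U * Matrix.diagonal (fun i => (f i : ℂ)) * U.conjTranspose) *
      (V * Matrix.diagonal (fun i => (g i : ℂ)) * V.conjTranspose)) =
      rtr (Matrix.diagonal (fun i => (f i : ℂ)) * Z * (Matrix.diagonal (fun i => (g i : ℂ))
        * Z.conjTranspose)) := by
    rw [hZh, hZ]
    simp only [mul_assoc]
    rw [rtr_comm]
    simp only [mul_assoc]
  rw [e1]
  simp only [rtr, Matrix.trace, Matrix.diag, Complex.re_sum]
  refine Finset.sum_congr rfl fun i _ => ?_
  rw [Matrix.mul_apply, Complex.re_sum]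
  refine Finset.sum_congr rfl fun j _ => ?_
  rw [Matrix.diagonal_mul, Matrix.diagonal_mul, Matrix.conjTranspose_apply,
    ← Complex.normSq_eq_norm_sq]
  simp [Complex.normSq_apply]
  ring

end Mat

section NS

variable {N : Type} [Fintype N] [DecidableEq N]

lemma row_sum (Z : Matrix N N ℂ) (hZ : Z * Z.conjTranspose = 1) (i : N) :
    ∑ j, ‖Z i j‖ ^ 2 = 1 := by
  have h : ((Z * Z.conjTranspose) i i).re = 1 := by rw [hZ]; simp
  rw [← h, Matrix.mul_apply, Complex.re_sum]
  refine Finset.sum_congr rfl fun j _ => ?_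
  rw [Matrix.conjTranspose_apply, ← Complex.normSq_eq_norm_sq]
  simp [Complex.normSq_apply]

/-- Nussbaum–Szkoła type bound on the root fidelity. -/
lemma ns_bound (U V ω : Matrix N N ℂ) (hU : U.conjTranspose * U = 1)
    (hV : V.conjTranspose * V = 1)
    (hV' : V * V.conjTranspose = 1)
    (p q : N → ℝ) (hp : ∀ i, 0 ≤ p i) (hq : ∀ i, 0 ≤ q i) (hp1 : ∑ i, p i = 1)
    (hω : IsState ω) (c : ℝ) (hc : 0 ≤ c)
    (h : ((c : ℂ) • (V * Matrix.diagonal (fun i => (q i : ℂ)) * V.conjTranspose) - ω).PosSemidef)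
    (τ : ℝ) (hτ : 0 < τ) (s : ℝ) (hs0 : 0 < s) :
    rtr (msqrt (msqrt ω * (U * Matrix.diagonal (fun i => (p i : ℂ)) * U.conjTranspose) *
      msqrt ω)) ≤
      Real.sqrt (τ ^ s * ∑ i, ∑ j, p i ^ (1 - s) * q j ^ s * ‖(U.conjTranspose * V) i j‖ ^ 2) +
      Real.sqrt (c / τ) := by
  set Z := U.conjTranspose * V with hZ
  have hZh : Z.conjTranspose = V.conjTranspose * U := by
    rw [hZ, Matrix.conjTranspose_mul, Matrix.conjTranspose_conjTranspose]
  have hZZ : Z * Z.conjTranspose = 1 := by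
    rw [hZh, hZ]
    calc _ = U.conjTranspose * (V * V.conjTranspose) * U := by simp only [mul_assoc]
      _ = 1 := by rw [hV', mul_one, hU]
  have hZV : Z * V.conjTranspose = U.conjTranspose := by
    rw [hZ, mul_assoc, hV', mul_one]
  set D : Matrix N N ℂ := Matrix.diagonal (fun i => (Real.sqrt (p i) : ℂ)) with hD
  set Dq : Matrix N N ℂ := Matrix.diagonal (fun i => (Real.sqrt (q i) : ℂ)) with hDq
  have hDh : D.conjTranspose = D := by
    rw [hD, Matrix.diagonal_conjTranspose]
    congr 1; ext i; simp
  have hDqh : Dq.conjTranspose = Dq := by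
    rw [hDq, Matrix.diagonal_conjTranspose]
    congr 1; ext i; simp
  have hDD : D * D = Matrix.diagonal (fun i => (p i : ℂ)) := by
    rw [hD, Matrix.diagonal_mul_diagonal]
    congr 1; ext i
    rw [← Complex.ofReal_mul, Real.mul_self_sqrt (hp i)]
  have hDDq : Dq * Dq = Matrix.diagonal (fun i => (q i : ℂ)) := by
    rw [hDq, Matrix.diagonal_mul_diagonal]
    congr 1; ext i
    rw [← Complex.ofReal_mul, Real.mul_self_sqrt (hq i)]
  set G := D * U.conjTranspose with hG
  have hGG : G.conjTranspose * G =
      U * Matrix.diagonal (fun i => (p i : ℂ)) * U.conjTranspose := by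
    rw [hG, Matrix.conjTranspose_mul, hDh, Matrix.conjTranspose_conjTranspose, ← hDD]
    simp only [mul_assoc]
  have hGtr : rtr (G.conjTranspose * G) = 1 := by
    rw [hGG, rtr_comm, ← mul_assoc, hU, one_mul, rtr, Matrix.trace_diagonal]
    rw [← Complex.ofReal_sum, Complex.ofReal_re, hp1]
  set M : Matrix N N ℂ := Matrix.of (fun i j => if p i < τ * q j then 0 else Z i j) with hM
  set T := U * M * V.conjTranspose with hT
  have key := fid_bound G ω T _ hω hGtr c h
  rw [hGG] at key
  refine key.trans (add_le_add (Real.sqrt_le_sqrt ?_) (Real.sqrt_le_sqrt ?_))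
  · have e1 : G * (1 - T) = D * (Z - M) * V.conjTranspose := by
      rw [hT, mul_sub, mul_one, hG]
      have : D * U.conjTranspose * (U * M * V.conjTranspose) =
          D * (U.conjTranspose * U) * M * V.conjTranspose := by simp only [mul_assoc]
      rw [this, hU, mul_one, mul_sub, sub_mul, mul_assoc D Z, hZV]
    have e2 : rtr ((G * (1 - T)).conjTranspose * (G * (1 - T))) =
        rtr (D * (Z - M) * (D * (Z - M)).conjTranspose) := by
      rw [rtr_comm, e1, Matrix.conjTranspose_mul (D * (Z - M)),
        Matrix.conjTranspose_conjTranspose]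
      congr 1
      calc _ = D * (Z - M) * (V.conjTranspose * V) * (D * (Z - M)).conjTranspose := by
            simp only [mul_assoc]
        _ = _ := by rw [hV, mul_one]
    rw [e2, rtr_self_conj, Finset.mul_sum]
    refine Finset.sum_le_sum fun i _ => ?_
    rw [Finset.mul_sum]
    refine Finset.sum_le_sum fun j _ => ?_
    rw [hD, Matrix.diagonal_mul, norm_mul, mul_pow, Complex.norm_real, Real.norm_eq_abs, sq_abs,
      Real.sq_sqrt (hp i), Matrix.sub_apply]
    simp only [hM, Matrix.of_apply]
    have hnn : 0 ≤ τ ^ s * (p i ^ (1 - s) * q j ^ s * ‖Z i j‖ ^ 2) := by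
      have := hp i; have := hq j
      positivity
    split_ifs with hlt
    · rw [sub_zero]
      rcases (hp i).eq_or_lt with h0 | h0
      · rw [← h0]; rw [← h0] at hnn; simpa using hnn
      · have h1 : p i = p i ^ (1 - s) * p i ^ s := by
          rw [← Real.rpow_add h0]; simp
        have h2 : p i ^ s ≤ τ ^ s * q j ^ s := by
          rw [← Real.mul_rpow hτ.le (hq j)]
          exact Real.rpow_le_rpow (hp i) hlt.le hs0.le
        calc p i * ‖Z i j‖ ^ 2 = p i ^ (1 - s) * p i ^ s * ‖Z i j‖ ^ 2 := by rw [← h1]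
          _ ≤ p i ^ (1 - s) * (τ ^ s * q j ^ s) * ‖Z i j‖ ^ 2 := by gcongr
          _ = _ := by ring
    · simpa using hnn
  · have e1 : rtr (T * (V * Matrix.diagonal (fun i => (q i : ℂ)) * V.conjTranspose) *
        T.conjTranspose) = rtr (M * Dq * (M * Dq).conjTranspose) := by
      rw [hT, Matrix.conjTranspose_mul, Matrix.conjTranspose_mul,
        Matrix.conjTranspose_conjTranspose, Matrix.conjTranspose_mul M, hDqh]
      calc _ = rtr (U * (M * (V.conjTranspose * V) * Matrix.diagonal (fun i => (q i : ℂ)) *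
            (V.conjTranspose * V) * M.conjTranspose) * U.conjTranspose) := by
            simp only [mul_assoc]
        _ = rtr (U.conjTranspose * U * (M * (Dq * Dq) * M.conjTranspose)) := by
            rw [hV, mul_one, mul_one, rtr_comm, hDDq]
            simp only [mul_assoc]
        _ = _ := by
            rw [hU, one_mul]
            simp only [mul_assoc]
    rw [e1, rtr_self_conj, div_eq_mul_inv]
    refine mul_le_mul_of_nonneg_left ?_ hc
    have e2 : τ⁻¹ = ∑ i, ∑ j, τ⁻¹ * (p i * ‖Z i j‖ ^ 2) := by
      simp only [← Finset.mul_sum, row_sum Z hZZ]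
      simp [hp1]
    rw [e2]
    refine Finset.sum_le_sum fun i _ => Finset.sum_le_sum fun j _ => ?_
    rw [hDq, Matrix.mul_diagonal, norm_mul, mul_pow, Complex.norm_real, Real.norm_eq_abs, sq_abs,
      Real.sq_sqrt (hq j)]
    simp only [hM, Matrix.of_apply]
    split_ifs with hlt
    · have := hp i
      simp; positivity
    · rw [not_lt] at hlt
      have : q j ≤ τ⁻¹ * p i := by
        rw [inv_mul_eq_div, le_div_iff₀ hτ]; linarith
      calc ‖Z i j‖ ^ 2 * q j ≤ ‖Z i j‖ ^ 2 * (τ⁻¹ * p i) := by gcongr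
        _ = _ := by ring

end NS

/-! ### Tensor powers -/

section Tensor

variable {N : Type} [Fintype N] [DecidableEq N]

/-- Product of the values of a function along a tensor-power index. -/
def tpv (p : N → ℝ) : ∀ k : ℕ, tpow N k → ℝ
  | 0 => fun _ => 1
  | (k+1) => fun x => tpv p k x.1 * p x.2

lemma tpv_nonneg (p : N → ℝ) (hp : ∀ i, 0 ≤ p i) : ∀ (k : ℕ) (x : tpow N k), 0 ≤ tpv p k x
  | 0, _ => zero_le_one
  | (k+1), x => mul_nonneg (tpv_nonneg p hp k x.1) (hp x.2)

lemma tpowMat_mul (A B : Matrix N N ℂ) : ∀ k : ℕ,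
    tpowMat (A * B) k = tpowMat A k * tpowMat B k
  | 0 => (mul_one (1 : Matrix PUnit PUnit ℂ)).symm
  | (k+1) => by
    change Matrix.kronecker (tpowMat (A * B) k) (A * B) = _
    rw [tpowMat_mul A B k]
    exact Matrix.mul_kronecker_mul _ _ _ _

lemma tpowMat_conjTranspose (A : Matrix N N ℂ) : ∀ k : ℕ,
    tpowMat A.conjTranspose k = (tpowMat A k).conjTranspose
  | 0 => (Matrix.conjTranspose_one (n := PUnit) (α := ℂ)).symm
  | (k+1) => by
    change Matrix.kronecker (tpowMat A.conjTranspose k) (A.conjTranspose) = _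
    rw [tpowMat_conjTranspose A k]
    exact (Matrix.conjTranspose_kronecker _ _).symm

lemma tpowMat_one : ∀ k : ℕ, tpowMat (1 : Matrix N N ℂ) k = 1
  | 0 => rfl
  | (k+1) => by
    change Matrix.kronecker (tpowMat (1 : Matrix N N ℂ) k) (1 : Matrix N N ℂ) = _
    rw [tpowMat_one k]
    exact Matrix.one_kronecker_one

lemma tpowMat_diagonal (p : N → ℝ) : ∀ k : ℕ,
    tpowMat (Matrix.diagonal (fun i => (p i : ℂ))) k =
      Matrix.diagonal (fun i => (tpv p k i : ℂ))
  | 0 => by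
    change (1 : Matrix (tpow N 0) (tpow N 0) ℂ) = _
    rw [← Matrix.diagonal_one]
    exact congrArg Matrix.diagonal (funext fun _ => Complex.ofReal_one.symm)
  | (k+1) => by
    change Matrix.kronecker (tpowMat (Matrix.diagonal (fun i => (p i : ℂ))) k) 
      (Matrix.diagonal (fun i => (p i : ℂ))) = _
    rw [tpowMat_diagonal p k]
    refine (Matrix.diagonal_kronecker_diagonal _ _).trans ?_
    congr 1
    ext x
    exact (Complex.ofReal_mul _ _).symm

lemma tpv_sum (p : N → ℝ) : ∀ k : ℕ, ∑ x, tpv p k x = (∑ i, p i) ^ k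
  | 0 => by
    change ∑ x : PUnit, (1 : ℝ) = _
    simp
  | (k+1) => by
    rw [pow_succ, ← tpv_sum p k, Finset.sum_mul_sum]
    exact Fintype.sum_prod_type _

lemma tpow_moment (p q : N → ℝ) (hp : ∀ i, 0 ≤ p i) (hq : ∀ i, 0 ≤ q i) (Z : Matrix N N ℂ)
    (s : ℝ) : ∀ k : ℕ,
    ∑ i, ∑ j, tpv p k i ^ (1 - s) * tpv q k j ^ s * ‖(tpowMat Z k) i j‖ ^ 2 =
      (∑ i, ∑ j, p i ^ (1 - s) * q j ^ s * ‖Z i j‖ ^ 2) ^ k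
  | 0 => by
    change ∑ i : PUnit, ∑ j : PUnit, (1 : ℝ) ^ (1 - s) * (1 : ℝ) ^ s *
      ‖(1 : Matrix PUnit PUnit ℂ) i j‖ ^ 2 = _
    simp
  | (k+1) => by
    rw [pow_succ, ← tpow_moment p q hp hq Z s k, Finset.sum_mul_sum]
    refine (Fintype.sum_prod_type _).trans ?_
    refine Finset.sum_congr rfl fun i _ => Finset.sum_congr rfl fun i' _ => ?_
    rw [Finset.sum_mul_sum]
    refine (Fintype.sum_prod_type _).trans ?_
    refine Finset.sum_congr rfl fun j _ => Finset.sum_congr rfl fun j' _ => ?_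
    change (tpv p k i * p i') ^ (1 - s) * (tpv q k j * q j') ^ s *
      ‖tpowMat Z k i j * Z i' j'‖ ^ 2 = _
    rw [Real.mul_rpow (tpv_nonneg p hp k i) (hp i'), Real.mul_rpow (tpv_nonneg q hq k j) (hq j'),
      norm_mul]
    ring

end Tensor

/-! ### Single-letter analysis -/

lemma epow2_log (g x : ℝ) (hg : g ≠ 0) (hx : 0 < x) :
    epow2 ((g : EReal) * (((g⁻¹ : ℝ) : EReal) * elog x)) = (x : EReal) := by
  rw [elog, if_neg (not_le.2 hx), ← EReal.coe_mul, ← EReal.coe_mul, mul_inv_cancel_left₀ hg,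
    epow2, if_neg (EReal.coe_ne_top _), if_neg (EReal.coe_ne_bot _), EReal.toReal_coe,
    Real.rpow_logb (by norm_num) (by norm_num) hx]

lemma suppLE_of_cGamma {N : Type} [Fintype N] [DecidableEq N] (ρ σ : Matrix N N ℂ) (γ : ℝ)
    (hγ : 0 < γ) (hc : cGamma γ ρ σ < ⊤) : SuppLE ρ σ := by
  by_contra hs
  refine absurd hc (not_lt.2 (le_of_eq ?_))
  have h1 : petzRenyi (1 + γ) ρ σ = ⊤ := by
    rw [petzRenyi, if_pos ⟨by linarith, hs⟩]
  have h2 : ∀ x, epow2 x ≠ ⊥ := by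
    intro x
    rw [epow2]
    split_ifs
    · simp
    · simp
    · exact EReal.coe_ne_bot _
  have h3 : epow2 ⊤ = ⊤ := by rw [epow2, if_pos rfl]
  rw [cGamma, h1, EReal.coe_mul_top_of_pos hγ, h3, EReal.top_add_of_ne_bot (h2 _),
    EReal.top_add_of_ne_bot (show (1 : EReal) ≠ ⊥ from EReal.coe_ne_bot 1), elogE, if_pos rfl,
    EReal.coe_mul_top_of_pos (inv_pos.2 hγ)]

lemma log3_log2 : 19 / 12 * Real.log 2 ≤ Real.log 3 := by
  have h : Real.log ((2 : ℝ) ^ 19) ≤ Real.log ((3 : ℝ) ^ 12) :=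
    Real.log_le_log (by norm_num) (by norm_num)
  rw [Real.log_pow, Real.log_pow] at h
  push_cast at h
  linarith

lemma single_letter {N : Type} [Fintype N] [DecidableEq N] (ρ σ : Matrix N N ℂ)
    (hρ : IsState ρ) (hσ : IsState σ) (γ : ℝ) (hγ : 0 < γ ∧ γ ≤ 1) (hs : SuppLE ρ σ) :
    ∃ (U V : Matrix N N ℂ) (p q : N → ℝ) (c : ℝ),
      U.conjTranspose * U = 1 ∧ V.conjTranspose * V = 1 ∧ V * V.conjTranspose = 1 ∧
      ρ = U * Matrix.diagonal (fun i => (p i : ℂ)) * U.conjTranspose ∧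
      σ = V * Matrix.diagonal (fun i => (q i : ℂ)) * V.conjTranspose ∧
      (∀ i, 0 ≤ p i) ∧ (∀ i, 0 ≤ q i) ∧ ∑ i, p i = 1 ∧
      cGamma γ ρ σ = (c : EReal) ∧ 19 / 12 ≤ c ∧
      ∀ n : ℕ, 1 ≤ n →
        ∑ i, ∑ j, p i ^ (1 - (c * Real.sqrt n)⁻¹) * q j ^ (c * Real.sqrt n)⁻¹ *
          ‖(U.conjTranspose * V) i j‖ ^ 2 ≤
        Real.exp (-((c * Real.sqrt n)⁻¹ * (Real.log 2 * rtr (ρ * (mlog ρ - mlog σ)))) +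
          1 / (2 * n)) := by
  have hρh := hρ.1.1
  have hσh := hσ.1.1
  set U : Matrix N N ℂ := (hρh.eigenvectorUnitary : Matrix N N ℂ) with hUdef
  set V : Matrix N N ℂ := (hσh.eigenvectorUnitary : Matrix N N ℂ) with hVdef
  set p := hρh.eigenvalues with hpdef
  set q := hσh.eigenvalues with hqdef
  have hU : U.conjTranspose * U = 1 := Unitary.coe_star_mul_self hρh.eigenvectorUnitary
  have hV : V.conjTranspose * V = 1 := Unitary.coe_star_mul_self hσh.eigenvectorUnitary
  have hV' : V * V.conjTranspose = 1 := Unitary.coe_mul_star_self hσh.eigenvectorUnitary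
  have hfρ : ∀ f : ℝ → ℝ, matFun f ρ =
      U * Matrix.diagonal (fun i => ((f (p i) : ℝ) : ℂ)) * U.conjTranspose :=
    fun f => matFun_eq f hρh
  have hfσ : ∀ f : ℝ → ℝ, matFun f σ =
      V * Matrix.diagonal (fun i => ((f (q i) : ℝ) : ℂ)) * V.conjTranspose :=
    fun f => matFun_eq f hσh
  have hρeq : ρ = U * Matrix.diagonal (fun i => (p i : ℂ)) * U.conjTranspose := by
    rw [← hfρ (fun x => x), matFun_id hρh]
  have hσeq : σ = V * Matrix.diagonal (fun i => (q i : ℂ)) * V.conjTranspose := by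
    rw [← hfσ (fun x => x), matFun_id hσh]
  have hp : ∀ i, 0 ≤ p i := hρ.1.eigenvalues_nonneg
  have hq : ∀ i, 0 ≤ q i := hσ.1.eigenvalues_nonneg
  set Z := U.conjTranspose * V with hZ
  have htr : ∀ f g : ℝ → ℝ, rtr (matFun f ρ * matFun g σ) =
      ∑ i, ∑ j, f (p i) * g (q j) * ‖Z i j‖ ^ 2 := by
    intro f g
    rw [hfρ, hfσ, hZ]
    exact rtr_two U V (fun i => f (p i)) (fun j => g (q j))
  have hp1 : ∑ i, p i = 1 := by
    have h1 : rtr ρ = 1 := by rw [rtr, hρ.2]; simp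
    rw [hρeq, rtr_comm, ← mul_assoc, hU, one_mul, rtr, Matrix.trace_diagonal,
      ← Complex.ofReal_sum, Complex.ofReal_re] at h1
    exact h1
  have hZZ : Z * Z.conjTranspose = 1 := by
    rw [hZ, Matrix.conjTranspose_mul, Matrix.conjTranspose_conjTranspose]
    calc _ = U.conjTranspose * (V * V.conjTranspose) * U := by simp only [mul_assoc]
      _ = 1 := by rw [hV', mul_one, hU]
  -- support condition
  have hsupp : ∀ i j, q j = 0 → p i * ‖Z i j‖ ^ 2 = 0 := by
    intro i j hj
    have h1 : σ.mulVec (fun k => V k j) = 0 := by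
      have h2 : σ * V = V * Matrix.diagonal (fun i => (q i : ℂ)) := by
        conv_lhs => rw [hσeq]
        rw [mul_assoc, hV, mul_one]
      ext k
      change (σ * V) k j = 0
      rw [h2, Matrix.mul_diagonal, hj]
      simp
    have h3 := hs _ h1
    have h4 : U.conjTranspose * (ρ * V) = Matrix.diagonal (fun i => (p i : ℂ)) * Z := by
      conv_lhs => rw [hρeq]
      calc _ = (U.conjTranspose * U) * Matrix.diagonal (fun i => (p i : ℂ)) *
            (U.conjTranspose * V) := by simp only [mul_assoc]
        _ = _ := by rw [hU, one_mul]
    have h5 : (p i : ℂ) * Z i j = 0 := by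
      rw [← Matrix.diagonal_mul (fun i => (p i : ℂ)) Z i j, ← h4, Matrix.mul_apply]
      refine Finset.sum_eq_zero fun k _ => ?_
      have : (ρ * V) k j = 0 := congrFun h3 k
      rw [this, mul_zero]
    rcases mul_eq_zero.1 h5 with h6 | h6
    · rw [Complex.ofReal_eq_zero.1 h6, zero_mul]
    · rw [h6]; simp
  set w : N × N → ℝ := fun x => p x.1 * ‖Z x.1 x.2‖ ^ 2 with hw
  set X : N × N → ℝ := fun x => Real.log (p x.1) - Real.log (q x.2) with hX
  have hw0 : ∀ x, 0 ≤ w x := fun x => mul_nonneg (hp _) (sq_nonneg _)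
  have hw1 : ∑ x, w x = 1 := by
    rw [Fintype.sum_prod_type]
    simp only [hw, ← Finset.mul_sum, row_sum Z hZZ, mul_one, hp1]
  have hterm : ∀ (a : ℝ) i j, p i ≠ 0 → q j ≠ 0 →
      p i ^ (1 + a) * q j ^ (-a) * ‖Z i j‖ ^ 2 = w (i, j) * Real.exp (a * X (i, j)) := by
    intro a i j hi hj
    have hi' : 0 < p i := lt_of_le_of_ne (hp i) (Ne.symm hi)
    have hj' : 0 < q j := lt_of_le_of_ne (hq j) (Ne.symm hj)
    rw [Real.rpow_add hi', Real.rpow_one, Real.rpow_def_of_pos hi', Real.rpow_def_of_pos hj']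
    simp only [hw, hX]
    rw [mul_sub, sub_eq_add_neg, Real.exp_add]
    have e1 : Real.log (p i) * a = a * Real.log (p i) := mul_comm _ _
    have e2 : Real.log (q j) * -a = -(a * Real.log (q j)) := by ring
    rw [e1, e2]
    ring
  have hmoment : ∀ a : ℝ, rtr (mpow ρ (1 + a) * mpow σ (-a)) = ∑ x, w x * Real.exp (a * X x) := by
    intro a
    rw [mpow, mpow, htr, Fintype.sum_prod_type]
    refine Finset.sum_congr rfl fun i _ => Finset.sum_congr rfl fun j _ => ?_
    by_cases hi : p i = 0
    · simp [hw, hi]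
    · by_cases hj : q j = 0
      · have := hsupp i j hj
        simp [hw, hj, this]
      · rw [if_neg hi, if_neg hj]
        exact hterm a i j hi hj
  have hmoment' : ∀ s : ℝ, 0 < s → s < 1 → ∑ i, ∑ j, p i ^ (1 - s) * q j ^ s * ‖Z i j‖ ^ 2 =
      ∑ x, w x * Real.exp (-s * X x) := by
    intro s hs0 hs1
    rw [Fintype.sum_prod_type]
    refine Finset.sum_congr rfl fun i _ => Finset.sum_congr rfl fun j _ => ?_
    by_cases hi : p i = 0
    · simp [hw, hi, Real.zero_rpow (sub_pos.2 hs1).ne']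
    · by_cases hj : q j = 0
      · have := hsupp i j hj
        simp [hw, hj, this, Real.zero_rpow hs0.ne']
      · rw [← hterm (-s) i j hi hj]
        simp [sub_eq_add_neg]
  have hD : Real.log 2 * rtr (ρ * (mlog ρ - mlog σ)) = ∑ x, w x * X x := by
    have e1 : ρ * mlog ρ = matFun (fun x => x * Real.logb 2 x) ρ * matFun (fun _ => 1) σ := by
      rw [matFun_one hσh, mul_one, ← matFun_mul _ _ hρh, matFun_id hρh, mlog]
    have e2 : ρ * mlog σ = matFun (fun x => x) ρ * matFun (Real.logb 2) σ := by
      rw [matFun_id hρh, mlog]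
    rw [mul_sub, rtr_sub, e1, e2, htr, htr, Fintype.sum_prod_type, ← Finset.sum_sub_distrib,
      Finset.mul_sum]
    refine Finset.sum_congr rfl fun i _ => ?_
    rw [← Finset.sum_sub_distrib, Finset.mul_sum]
    refine Finset.sum_congr rfl fun j _ => ?_
    simp only [hw, hX, Real.logb]
    have : Real.log 2 ≠ 0 := (Real.log_pos (by norm_num)).ne'
    field_simp
  set A := ∑ x, w x * Real.exp (γ * X x) with hA
  set B := ∑ x, w x * Real.exp (-(γ * X x)) with hB
  have hAB : 3 ≤ A + B + 1 := kappa_ge w (fun x => γ * X x) hw0 hw1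
  have hpos : ∀ Y : N × N → ℝ, 0 < ∑ x, w x * Real.exp (Y x) := by
    intro Y
    have hne : ∃ x ∈ Finset.univ, 0 < w x * Real.exp (Y x) := by
      by_contra hcon
      push Not at hcon
      have : ∑ x, w x = 0 := by
        refine Finset.sum_eq_zero fun x hx => ?_
        have h1 := hcon x hx
        have h2 := Real.exp_pos (Y x)
        exact le_antisymm (nonpos_of_mul_nonpos_left h1 h2) (hw0 x)
      rw [hw1] at this
      norm_num at this
    exact Finset.sum_pos' (fun x _ => mul_nonneg (hw0 x) (Real.exp_pos _).le) hne
  have hl2 : 0 < Real.log 2 := Real.log_pos (by norm_num)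
  set κ := Real.log (A + B + 1) with hκ
  have hκ3 : 19 / 12 * Real.log 2 ≤ κ :=
    log3_log2.trans (Real.log_le_log (by norm_num) hAB)
  have hκ0 : 0 < κ := lt_of_lt_of_le (by positivity) hκ3
  refine ⟨U, V, p, q, γ⁻¹ * Real.logb 2 (A + B + 1), hU, hV, hV', hρeq, hσeq, hp, hq, hp1,
    ?_, ?_, ?_⟩
  · have h1 : epow2 ((γ : EReal) * petzRenyi (1 + γ) ρ σ) = (A : EReal) := by
      rw [petzRenyi, if_neg (fun h => h.2 hs), add_sub_cancel_left,
        show (1 : ℝ) - (1 + γ) = -γ by ring, hmoment, ← hA]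
      exact epow2_log γ A hγ.1.ne' (hpos _)
    have h2 : epow2 (((-γ : ℝ) : EReal) * petzRenyi (1 - γ) ρ σ) = (B : EReal) := by
      rw [petzRenyi, if_neg (fun h => h.2 hs), show (1 : ℝ) - γ - 1 = -γ by ring,
        show (1 : ℝ) - γ = 1 + (-γ) by ring, show (1 : ℝ) - (1 + -γ) = -(-γ) by ring, hmoment]
      have e : ∑ x, w x * Real.exp (-γ * X x) = B := by simp only [hB, neg_mul]
      rw [e]
      exact epow2_log (-γ) B (neg_ne_zero.2 hγ.1.ne') (hpos _)
    rw [cGamma, h1, h2, ← EReal.coe_add, ← EReal.coe_one, ← EReal.coe_add, elogE,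
      if_neg (EReal.coe_ne_top _), EReal.toReal_coe, elog, if_neg (by linarith), ← EReal.coe_mul]
  · have h1 : 19 / 12 ≤ Real.logb 2 (A + B + 1) := by
      rw [Real.logb, le_div_iff₀ hl2]; exact hκ3
    have h2 : 1 ≤ γ⁻¹ := (one_le_inv₀ hγ.1).2 hγ.2
    nlinarith
  · intro n hn
    have hn' : (1 : ℝ) ≤ n := by exact_mod_cast hn
    have hsn : 1 ≤ Real.sqrt n := Real.one_le_sqrt.2 hn'
    set s := (γ⁻¹ * Real.logb 2 (A + B + 1) * Real.sqrt n)⁻¹ with hsdef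
    have hs' : s = γ * (Real.log 2 / (κ * Real.sqrt n)) := by
      rw [hsdef, Real.logb, ← hκ]
      have := hγ.1
      field_simp
    set y := Real.log 2 / (κ * Real.sqrt n) with hy
    have hy0 : 0 < y := by positivity
    have hy1 : y < 1 := by
      rw [hy, div_lt_one (by positivity)]
      nlinarith
    have hs0 : 0 < s := by rw [hs']; exact mul_pos hγ.1 hy0
    have hs1 : s < 1 := by rw [hs']; nlinarith [hγ.1, hγ.2]
    rw [hmoment' s hs0 hs1, hD]
    have hmgf := mgf_bound w (fun x => γ * X x) hw0 hw1 κ hκ0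
      (by rw [hκ, Real.exp_log (by linarith)]) y hy0.le hy1.le
    have e1 : ∑ x, w x * Real.exp (-s * X x) = ∑ x, w x * Real.exp (-(y * (γ * X x))) := by
      refine Finset.sum_congr rfl fun x _ => ?_
      rw [hs']; congr 2; ring
    have e2 : y * ∑ x, w x * (γ * X x) = s * ∑ x, w x * X x := by
      rw [hs', Finset.mul_sum, Finset.mul_sum]
      refine Finset.sum_congr rfl fun x _ => ?_
      ring
    rw [e1]
    refine hmgf.trans (Real.exp_le_exp.2 ?_)
    rw [e2]
    have e3 : y * κ = (Real.sqrt n)⁻¹ * Real.log 2 := by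
      rw [hy]; field_simp
    have e4 := cosh_small (Real.sqrt n)⁻¹ (by positivity) (inv_le_one_of_one_le₀ hsn)
    rw [inv_pow, Real.sq_sqrt (by positivity)] at e4
    rw [e3]
    have e5 : (n : ℝ)⁻¹ / 2 = 1 / (2 * n) := by field_simp
    linarith

/-- Non-asymptotic AEP lower bound for the smoothed max-relative entropy. -/
theorem dMaxSmooth_AEP_lower {d : ℕ} (ρ σ : Matrix (Fin d) (Fin d) ℂ)
    (hρ : IsState ρ) (hσ : IsState σ) (γ : ℝ) (hγ : 0 < γ ∧ γ ≤ 1)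
    (hc : cGamma γ ρ σ < ⊤) (ε : ℝ) (hε : 0 < ε ∧ ε < 1) (n : ℕ) (hn : 1 ≤ n) :
    relEntropy ρ σ -
        ((4 * (cGamma γ ρ σ).toReal / Real.sqrt n * Real.logb 2 (2 / (1 - ε)) : ℝ) : EReal) ≤
      (((n : ℝ)⁻¹ : ℝ) : EReal) * dMaxSmooth ε (tpowMat ρ n) (tpowMat σ n) := by
  have hsupp := suppLE_of_cGamma ρ σ γ hγ.1 hc
  obtain ⟨U, V, p, q, c, hU, hV, hV', hρeq, hσeq, hp, hq, hp1, hcc, hc1, hM⟩ :=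
    single_letter ρ σ hρ hσ γ hγ hsupp
  have hMn := hM n hn
  rw [relEntropy, if_pos hsupp, hcc, EReal.toReal_coe, ← EReal.coe_sub]
  set D := rtr (ρ * (mlog ρ - mlog σ)) with hD
  set L := Real.logb 2 (2 / (1 - ε)) with hL
  have hn' : (1 : ℝ) ≤ n := by exact_mod_cast hn
  have hn0 : (0 : ℝ) < n := by linarith
  have hsn : 1 ≤ Real.sqrt n := Real.one_le_sqrt.2 hn'
  have hδ : 0 < 1 - ε := by linarith [hε.2]
  have h2L : (2 : ℝ) ^ L = 2 / (1 - ε) :=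
    Real.rpow_logb (by norm_num) (by norm_num) (by positivity)
  have hL1 : 1 ≤ L := by
    rw [hL, Real.le_logb_iff_rpow_le (by norm_num) (by positivity), Real.rpow_one,
      le_div_iff₀ hδ]
    linarith [hε.1]
  have h2L' : (2 : ℝ) ^ (-L) = (1 - ε) / 2 := by
    rw [Real.rpow_neg (by norm_num), h2L, inv_div]
  have hc0 : 0 < c := by linarith
  -- it suffices to bound every admissible exponent
  suffices hmain : ((n * (D - 4 * c / Real.sqrt n * L) : ℝ) : EReal) ≤
      dMaxSmooth ε (tpowMat ρ n) (tpowMat σ n) by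
    have h1 := mul_le_mul_of_nonneg_left hmain
      (show (0 : EReal) ≤ (((n : ℝ)⁻¹ : ℝ) : EReal) from
        EReal.coe_nonneg.2 (inv_nonneg.2 hn0.le))
    rw [← EReal.coe_mul, inv_mul_cancel_left₀ hn0.ne'] at h1
    exact h1
  rw [dMaxSmooth]
  refine le_iInf₂ fun ω hω => ?_
  rw [dMax]
  refine le_sInf ?_
  rintro x ⟨lam, rfl, hlam⟩
  rw [EReal.coe_le_coe_iff]
  by_contra hcon
  rw [not_le] at hcon
  have hr : n * (D - 4 * c / Real.sqrt n * L) = n * D - 4 * (c * Real.sqrt n) * L := by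
    have h1 : (n : ℝ) = Real.sqrt n * Real.sqrt n := (Real.mul_self_sqrt hn0.le).symm
    have h2 : (n : ℝ) * (4 * c / Real.sqrt n * L) = 4 * (c * Real.sqrt n) * L := by
      field_simp
      rw [Real.sq_sqrt hn0.le]
    rw [mul_sub, h2]
  rw [hr] at hcon
  set s := (c * Real.sqrt n)⁻¹ with hs
  have hcs : 19 / 12 ≤ c * Real.sqrt n := by nlinarith
  have hs0 : 0 < s := inv_pos.2 (by positivity)
  have hs12 : s ≤ 12 / 19 := by
    rw [hs, show (12 / 19 : ℝ) = (19 / 12)⁻¹ by norm_num]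
    exact inv_anti₀ (by norm_num) hcs
  have hsr : s * (c * Real.sqrt n) = 1 := inv_mul_cancel₀ (by positivity)
  set t := n * D - 4 * (c * Real.sqrt n) * L + 2 * L with ht
  have hl2 : 0.6931471803 < Real.log 2 := Real.log_two_gt_d9
  have hl20 : 0 < Real.log 2 := by linarith
  -- tensor power structure
  have hRn : tpowMat ρ n = tpowMat U n * Matrix.diagonal (fun i => (tpv p n i : ℂ)) *
      (tpowMat U n).conjTranspose := by
    conv_lhs => rw [hρeq]
    rw [tpowMat_mul, tpowMat_mul, tpowMat_diagonal, tpowMat_conjTranspose]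
  have hSn : tpowMat σ n = tpowMat V n * Matrix.diagonal (fun i => (tpv q n i : ℂ)) *
      (tpowMat V n).conjTranspose := by
    conv_lhs => rw [hσeq]
    rw [tpowMat_mul, tpowMat_mul, tpowMat_diagonal, tpowMat_conjTranspose]
  have hUn : (tpowMat U n).conjTranspose * tpowMat U n = 1 := by
    rw [← tpowMat_conjTranspose, ← tpowMat_mul, hU, tpowMat_one]
  have hVn : (tpowMat V n).conjTranspose * tpowMat V n = 1 := by
    rw [← tpowMat_conjTranspose, ← tpowMat_mul, hV, tpowMat_one]
  have hVn' : tpowMat V n * (tpowMat V n).conjTranspose = 1 := by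
    rw [← tpowMat_conjTranspose, ← tpowMat_mul, hV', tpowMat_one]
  rw [loewnerLE, hSn] at hlam
  have hkey := ns_bound (tpowMat U n) (tpowMat V n) ω hUn hVn hVn' (tpv p n) (tpv q n)
    (tpv_nonneg p hp n) (tpv_nonneg q hq n) (by rw [tpv_sum, hp1, one_pow]) hω.1
    ((2 : ℝ) ^ lam) (by positivity) hlam ((2 : ℝ) ^ t) (by positivity) s hs0
  rw [← hRn, ← tpowMat_conjTranspose, ← tpowMat_mul, tpow_moment p q hp hq _ s n] at hkey
  -- first term
  have hT1 : ((2 : ℝ) ^ t) ^ s *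
      (∑ i, ∑ j, p i ^ (1 - s) * q j ^ s * ‖(U.conjTranspose * V) i j‖ ^ 2) ^ n ≤
      ((2 : ℝ) ^ (-L)) ^ 2 := by
    have h0 : 0 ≤ ∑ i, ∑ j, p i ^ (1 - s) * q j ^ s * ‖(U.conjTranspose * V) i j‖ ^ 2 :=
      Finset.sum_nonneg fun i _ => Finset.sum_nonneg fun j _ => by
        have := hp i; have := hq j
        positivity
    calc _ ≤ ((2 : ℝ) ^ t) ^ s * (Real.exp (-(s * (Real.log 2 * D)) + 1 / (2 * n))) ^ n := by
          gcongr
      _ = Real.exp (Real.log 2 * (t * s) + n * (-(s * (Real.log 2 * D)) + 1 / (2 * n))) := by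
          rw [← Real.rpow_mul (by norm_num), Real.rpow_def_of_pos (by norm_num), ← Real.exp_nat_mul,
            ← Real.exp_add]
      _ ≤ Real.exp (2 * (Real.log 2 * (-L))) := by
          rw [Real.exp_le_exp]
          have h1 : n * (-(s * (Real.log 2 * D)) + 1 / (2 * n)) =
              -(Real.log 2 * (s * (n * D))) + 1 / 2 := by
            field_simp
          have h2 : t * s = s * (n * D) - 4 * L + 2 * L * s := by
            rw [ht]
            linear_combination (-4 * L) * hsr
          rw [h1, h2]
          have h3 : L * s ≤ L * (12 / 19) := by gcongr
          have h4 : Real.log 2 * (L * s) ≤ Real.log 2 * (L * (12 / 19)) := by gcongr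
          have h5 : Real.log 2 * 1 ≤ Real.log 2 * L := by gcongr
          nlinarith
      _ = _ := by
          rw [Real.rpow_def_of_pos (by norm_num), ← Real.exp_nat_mul]
          norm_num
  have hT2 : (2 : ℝ) ^ lam / (2 : ℝ) ^ t ≤ ((2 : ℝ) ^ (-L)) ^ 2 := by
    rw [← Real.rpow_sub (by norm_num), ← Real.rpow_natCast, ← Real.rpow_mul (by norm_num)]
    apply Real.rpow_le_rpow_of_exponent_le (by norm_num)
    push_cast
    linarith
  have h2p : (0 : ℝ) ≤ (2 : ℝ) ^ (-L) := by positivity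
  have hsum : rtr (msqrt (msqrt ω * tpowMat ρ n * msqrt ω)) ≤ 1 - ε := by
    refine hkey.trans ?_
    have h1 := Real.sqrt_le_sqrt hT1
    have h2 := Real.sqrt_le_sqrt hT2
    rw [Real.sqrt_sq h2p, h2L'] at h1 h2
    linarith
  have hnn : 0 ≤ rtr (msqrt (msqrt ω * tpowMat ρ n * msqrt ω)) := by
    apply rtr_msqrt_nonneg
    have h1 : (tpowMat ρ n).PosSemidef := by
      rw [hRn]
      apply Matrix.PosSemidef.mul_mul_conjTranspose_same
      rw [Matrix.posSemidef_diagonal_iff]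
      intro i
      exact_mod_cast tpv_nonneg p hp n i
    have h2 := h1.mul_mul_conjTranspose_same (msqrt ω)
    rwa [show (msqrt ω).conjTranspose = msqrt ω from (matFun_herm _ _).eq] at h2
  have hdist := hω.2
  rw [sineDist, Real.sqrt_le_left hε.1.le, fidelity] at hdist
  nlinarith [hε.1, hε.2]

end QCD
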